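/- Let F, G : [0,1] → Mₙ(ℝ) be matrix-valued functions with F continuous, G integrable, and F(s) = I + ∫₀^s G(σ)F(σ) dσ for all s ∈ [0,1]. Then det(F(s)) = exp(∫₀^s tr(G(σ)) dσ) for all s ∈ [0,1]. -/

import Mathlib

open MeasureTheory Filter Set Topology
open scoped ENNReal NNReal

noncomputable section

/-- The underlying set of the Heisenberg group: ℝ³. -/
abbrev HG : Type := ℝ × ℝ × ℝ

namespace Heis

/-- Heisenberg group product. -/
def mul (p q : HG) : HG :=
  (p.1 + q.1, p.2.1 + q.2.1, p.2.2 + q.2.2 + 2 * (q.1 * p.2.1 - p.1 * q.2.1))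

/-- Heisenberg group inverse. -/
def inv (p : HG) : HG := (-p.1, -p.2.1, -p.2.2)

/-- Korányi norm. -/
def knorm (p : HG) : ℝ := ((p.1 ^ 2 + p.2.1 ^ 2) ^ 2 + p.2.2 ^ 2) ^ ((1 : ℝ) / 4)

/-- Heisenberg (Korányi) metric d(p,q) = ‖q⁻¹⋆p‖. -/
def d (p q : HG) : ℝ := knorm (mul (inv q) p)

/-- Open ball for the Heisenberg metric. -/
def ball (p : HG) (r : ℝ) : Set HG := {q | d p q < r}

/-- Heisenberg dilation δ_r. -/
def dil (r : ℝ) (p : HG) : HG := (r * p.1, r * p.2.1, r ^ 2 * p.2.2)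

/-- Pointwise dilatation H_f(p). -/
def dilat (f : HG → HG) (p : HG) : ℝ :=
  limsup (fun r : ℝ =>
      sSup ((fun q => d (f p) (f q)) '' {q | d p q ≤ r}) /
        sInf ((fun q => d (f p) (f q)) '' {q | r ≤ d p q}))
    (nhdsWithin 0 (Ioi 0))

/-- f is a homeomorphism of ℍ. -/
def IsHomeo (f : HG → HG) : Prop :=
  Function.Bijective f ∧ Continuous f ∧ Continuous (Function.invFun f)

/-- f is a quasiconformal mapping of ℍ. -/
def IsQC (f : HG → HG) : Prop := IsHomeo f ∧ ∃ M : ℝ, ∀ p, dilat f p ≤ M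

/-- f is a K-quasiconformal mapping of ℍ. -/
def IsKQC (K : ℝ) (f : HG → HG) : Prop :=
  IsQC f ∧ ∀ᵐ p ∂(volume : Measure HG), dilat f p ≤ K

/-- Jacobian (volume derivative) of a mapping. -/
def jac (f : HG → HG) (p : HG) : ℝ :=
  limsup (fun r : ℝ => (volume (f '' ball p r) / volume (ball p r)).toReal)
    (nhdsWithin 0 (Ioi 0))

/-- The class 𝒬₀(K). -/
def Q0 (K : ℝ) (g : HG → HG) : Prop :=
  IsKQC K g ∧ g 0 = 0 ∧ ∃ p : HG, knorm p = 1 ∧ knorm (g p) = 1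

/-- Integral against a finite signed measure. -/
def svIntegral (μ : SignedMeasure HG) (f : HG → ℝ) : ℝ :=
  (∫ q, f q ∂μ.toJordanDecomposition.posPart) - ∫ q, f q ∂μ.toJordanDecomposition.negPart

/-- Total variation ‖μ‖ of a finite signed measure. -/
def tv (μ : SignedMeasure HG) : ℝ := (μ.totalVariation Set.univ).toReal

/-- μ is an admissible measure: finite signed (Radon) measure with finite logarithmic moment. -/
def Admissible (μ : SignedMeasure HG) : Prop :=
  ∫⁻ q, ENNReal.ofReal (max (Real.log (knorm q)) 0) ∂μ.totalVariation < ⊤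

/-- Logarithmic potential Λ_μ of a signed measure. -/
def logPot (μ : SignedMeasure HG) (p : HG) : ℝ := -svIntegral μ (fun q => Real.log (d p q))

/-- Logarithmic potential Λ_ψ with density ψ. -/
def logPotF (ψ : HG → ℝ) (p : HG) : ℝ := -∫ q, Real.log (d p q) * ψ q

/-- Coordinate curve through p in the i-th horizontal direction. -/
def hcurve (i : Fin 2) (p : HG) (s : ℝ) : HG :=
  if i = 0 then mul p ((s, 0, 0) : HG) else mul p ((0, s, 0) : HG)

/-- i-th classical horizontal derivative (X for i=0, Y for i=1). -/
def hD (i : Fin 2) (φ : HG → ℝ) (p : HG) : ℝ := deriv (fun s : ℝ => φ (hcurve i p s)) 0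

/-- Existence of the i-th classical horizontal derivative at p. -/
def HDiffAt (i : Fin 2) (φ : HG → ℝ) (p : HG) : Prop :=
  DifferentiableAt ℝ (fun s : ℝ => φ (hcurve i p s)) 0

/-- Xφ. -/
def XD (φ : HG → ℝ) : HG → ℝ := hD 0 φ
/-- Yφ. -/
def YD (φ : HG → ℝ) : HG → ℝ := hD 1 φ
/-- Tφ. -/
def TD (φ : HG → ℝ) (p : HG) : ℝ := deriv (fun s : ℝ => φ (mul p ((0, 0, s) : HG))) 0

/-- φ ∈ HC¹ : continuous with continuous classical horizontal derivatives. -/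
def HC1 (φ : HG → ℝ) : Prop :=
  Continuous φ ∧ (∀ p, HDiffAt 0 φ p) ∧ (∀ p, HDiffAt 1 φ p) ∧
    Continuous (XD φ) ∧ Continuous (YD φ)

/-- Zφ = ½(Xφ − iYφ). -/
def ZD (φ : HG → ℝ) (p : HG) : ℂ :=
  (1 / 2 : ℂ) * (Complex.ofReal (XD φ p) - Complex.I * Complex.ofReal (YD φ p))

/-- Classical ZZφ = ¼(XXφ − YYφ − i(XYφ + YXφ)). -/
def ZZD (φ : HG → ℝ) (p : HG) : ℂ :=
  (1 / 4 : ℂ) * (Complex.ofReal (XD (XD φ) p - YD (YD φ) p) -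
    Complex.I * Complex.ofReal (XD (YD φ) p + YD (XD φ) p))

/-- Horizontal X derivative for complex-valued functions. -/
def XDc (ξ : HG → ℂ) (p : HG) : ℂ := deriv (fun s : ℝ => ξ (mul p ((s, 0, 0) : HG))) 0
/-- Horizontal Y derivative for complex-valued functions. -/
def YDc (ξ : HG → ℂ) (p : HG) : ℂ := deriv (fun s : ℝ => ξ (mul p ((0, s, 0) : HG))) 0

/-- ZZ for complex-valued test functions. -/
def ZZc (ξ : HG → ℂ) (p : HG) : ℂ :=
  (1 / 4 : ℂ) * (XDc (XDc ξ) p - YDc (YDc ξ) p - Complex.I * (XDc (YDc ξ) p + YDc (XDc ξ) p))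

/-- u is the distributional derivative ZZφ. -/
def HasDistribZZ (φ : HG → ℝ) (u : HG → ℂ) : Prop :=
  AEStronglyMeasurable u (volume : Measure HG) ∧
  ∀ ξ : HG → ℂ, ContDiff ℝ (⊤ : ℕ∞) ξ → HasCompactSupport ξ →
    ∫ p, u p * ξ p = ∫ p, (Complex.ofReal (φ p)) * ZZc ξ p

/-- u is the weak X-derivative of F. -/
def IsWeakXDeriv (F u : HG → ℝ) : Prop :=
  ∀ ξ : HG → ℝ, ContDiff ℝ (⊤ : ℕ∞) ξ → HasCompactSupport ξ →
    ∫ p, u p * ξ p = -∫ p, F p * XD ξ p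

/-- u is the weak Y-derivative of F. -/
def IsWeakYDeriv (F u : HG → ℝ) : Prop :=
  ∀ ξ : HG → ℝ, ContDiff ℝ (⊤ : ℕ∞) ξ → HasCompactSupport ξ →
    ∫ p, u p * ξ p = -∫ p, F p * YD ξ p

/-- u ∈ L^r_loc. -/
def MemLrLoc (u : HG → ℝ) (r : ℝ) : Prop :=
  LocallyIntegrable (fun p => |u p| ^ r) (volume : Measure HG)

/-- F ∈ HW^{1,r}_loc for every 1 ≤ r < ∞. -/
def MemHW1AllLoc (F : HG → ℝ) : Prop :=
  LocallyIntegrable F (volume : Measure HG) ∧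
  ∃ u v : HG → ℝ, IsWeakXDeriv F u ∧ IsWeakYDeriv F v ∧
    ∀ r : ℝ, 1 ≤ r → MemLrLoc u r ∧ MemLrLoc v r

/-- The contact vector field v_φ = −¼(Yφ)X + ¼(Xφ)Y + φT, in coordinates. -/
def vf (φ : HG → ℝ) (p : HG) : HG :=
  (-(1 / 4) * YD φ p, (1 / 4) * XD φ p,
    -(1 / 4) * YD φ p * (2 * p.2.1) + (1 / 4) * XD φ p * (-(2) * p.1) + φ p)

/-- γ solves the flow equation for v_φ at p. -/
def IsFlowSol (φ : HG → ℝ) (p : HG) (γ : ℝ → HG) : Prop :=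
  γ 0 = p ∧ ∀ s : ℝ, HasDerivAt γ (vf φ (γ s)) s

/-- |γ'(s)|_H. -/
def hnormD (γ : ℝ → HG) (s : ℝ) : ℝ :=
  Real.sqrt ((deriv γ s).1 ^ 2 + (deriv γ s).2.1 ^ 2)

/-- γ is a horizontal curve on [a,b]. -/
def IsHorizontal (γ : ℝ → HG) (a b : ℝ) : Prop :=
  a ≤ b ∧ ContinuousOn γ (Icc a b) ∧
  (∀ s ∈ Ioo a b, DifferentiableAt ℝ γ s) ∧
  ContinuousOn (deriv γ) (Ioo a b) ∧
  ∀ s ∈ Ioo a b,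
    (deriv γ s).2.2 = 2 * (γ s).2.1 * (deriv γ s).1 - 2 * (γ s).1 * (deriv γ s).2.1

/-- γ is piecewise horizontal on [a,b]. -/
def IsPiecewiseHorizontal (γ : ℝ → HG) (a b : ℝ) : Prop :=
  ContinuousOn γ (Icc a b) ∧
  ∃ n : ℕ, ∃ t : Fin (n + 1) → ℝ, Monotone t ∧ t 0 = a ∧ t (Fin.last n) = b ∧
    ∀ i : Fin n, IsHorizontal γ (t i.castSucc) (t i.succ)

/-- Carnot–Carathéodory distance ρ. -/
def ccDist (p q : HG) : ℝ :=
  sInf {L : ℝ | ∃ (γ : ℝ → HG) (a b : ℝ), IsPiecewiseHorizontal γ a b ∧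
    γ a = p ∧ γ b = q ∧ L = ∫ s in a..b, hnormD γ s}

/-- An admissible curve for (p,q). -/
structure AdmCurve (p q : HG) where
  b : ℝ
  hb : 0 ≤ b
  γ : ℝ → HG
  cont : ContinuousOn γ (Icc 0 b)
  h0 : γ 0 = p
  h1 : γ b = q
  E : Set ℝ
  hE : volume E = 0
  ak : ℕ → ℝ
  bk : ℕ → ℝ
  hab : ∀ k, ak k ≤ bk k
  γk : ℕ → ℝ → HG
  hhor : ∀ k, IsHorizontal (γk k) (ak k) (bk k)
  hrep : ∀ s ∈ Icc 0 b \ E, γ s = ∑' k, Set.indicator (Ioo (ak k) (bk k)) (γk k) s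
  hlen : Summable fun k => ∫ s in (ak k)..(bk k), hnormD (γk k) s

/-- ∫_γ w for an admissible curve. -/
def admIntegral {p q : HG} (c : AdmCurve p q) (w : HG → ℝ) : ℝ :=
  ∫ s in Icc 0 c.b \ c.E, w (c.γ s) * hnormD c.γ s

/-- Weighted distance ρ_w. -/
def rhoW (w : HG → ℝ) (p q : HG) : ℝ :=
  sInf {L : ℝ | ∃ c : AdmCurve p q, L = admIntegral c fun u => w u ^ ((1 : ℝ) / 4)}

/-- Γ_u(p,q) = δ_{d(p,q)⁻¹}(u⁻¹⋆p). -/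
def Gam (u p q : HG) : HG := dil (d p q)⁻¹ (mul (inv u) p)

/-- λ_g, depending on a fixed cut-off ξ₀. -/
def lam (g : HG → HG) (ξ₀ : HG → ℝ) (p q : HG) : ℝ :=
  if p = q then 0 else (∫ u, jac g u * ξ₀ (Gam u p q)) ^ ((1 : ℝ) / 4)

/-- The properties required of the fixed cut-off function ξ₀. -/
def IsCutoff (ξ₀ : HG → ℝ) : Prop :=
  ContDiff ℝ (⊤ : ℕ∞) ξ₀ ∧ HasCompactSupport ξ₀ ∧ (∀ p, 0 ≤ ξ₀ p ∧ ξ₀ p ≤ 1) ∧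
    (∀ p ∈ ball (0 : HG) (1 / 4), ξ₀ p = 1) ∧ tsupport ξ₀ ⊆ ball (0 : HG) (1 / 2)

/-- η_g(p,q) = −log λ_g(p, g⁻¹(q)). -/
def etaF (g : HG → HG) (ξ₀ : HG → ℝ) (p q : HG) : ℝ :=
  -Real.log (lam g ξ₀ p (Function.invFun g q))

/-- φ̃_g(p,q). -/
def phiTilde (g : HG → HG) (ξ₀ : HG → ℝ) (p q : HG) : ℝ :=
  if p = Function.invFun g q then 0
  else etaF g ξ₀ p q * (mul (inv (Function.invFun g q)) p).2.2

/-- φ¹_{g,ψ}. -/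
def phi1 (g : HG → HG) (ξ₀ ψ : HG → ℝ) (p : HG) : ℝ := ∫ q, phiTilde g ξ₀ p q * ψ q

/-- φ²_{g,ψ}(x,y,t) = v₁(0) − 4v₂(0)y + 4v₃(0)x. -/
def phi2 (g : HG → HG) (ξ₀ ψ : HG → ℝ) (p : HG) : ℝ :=
  (vf (phi1 g ξ₀ ψ) 0).1 - 4 * (vf (phi1 g ξ₀ ψ) 0).2.1 * p.2.1 +
    4 * (vf (phi1 g ξ₀ ψ) 0).2.2 * p.1

/-- The contact generating potential φ_{g,ψ}. -/
def phiC (g : HG → HG) (ξ₀ ψ : HG → ℝ) (p : HG) : ℝ :=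
  phi1 g ξ₀ ψ p - phi2 g ξ₀ ψ p

/-- k-th smooth regularization ψ_k of μ (with fixed mollifier Ψ). -/
def reg (μ : SignedMeasure HG) (Ψ : HG → ℝ) (k : ℕ) (p : HG) : ℝ :=
  svIntegral μ fun q => (k : ℝ) ^ 4 * Ψ (dil (k : ℝ) (mul (inv q) p))

/-- K(f) = esssup H_f. -/
def Kof (f : HG → HG) : ℝ := essSup (dilat f) (volume : Measure HG)

end Heis

open Heis

/-!
The equation makes every entry of `F` absolutely continuous, with `F' = G F` almost everywhere.
Since `det` is locally Lipschitz, `det F` is absolutely continuous as well, and Jacobi's formula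
`(det F)' = tr (adj F · F')`, together with `F · adj F = det F · I`, gives
`(det F)' = tr G · det F` almost everywhere. Hence `det F · exp (-∫ tr G)` has zero derivative
almost everywhere; being absolutely continuous, it is constant.
-/

section AbsolutelyContinuous

variable {a b : ℝ} {X Y : Type*} [PseudoMetricSpace X] [PseudoMetricSpace Y]

lemma absolutelyContinuousOnInterval_of_dist_le {f : ℝ → X} {g : ℝ → Y} (K : ℝ)
    (hg : AbsolutelyContinuousOnInterval g a b)
    (hfg : ∀ x ∈ uIcc a b, ∀ y ∈ uIcc a b, dist (f x) (f y) ≤ K * dist (g x) (g y)) :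
    AbsolutelyContinuousOnInterval f a b := by
  have hK := Tendsto.const_mul K hg
  rw [mul_zero] at hK
  refine squeeze_zero' (.of_forall fun E ↦ Finset.sum_nonneg fun i _ ↦ dist_nonneg) ?_ hK
  filter_upwards [mem_inf_of_right (mem_principal_self _)] with E hE
  rw [Finset.mul_sum]
  exact Finset.sum_le_sum fun i hi ↦ hfg _ (hE.1 i hi).1 _ (hE.1 i hi).2

lemma absolutelyContinuousOnInterval_pi {ι : Type*} [Fintype ι] {Z : ι → Type*}
    [∀ i, PseudoMetricSpace (Z i)] {f : ℝ → ∀ i, Z i}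
    (hf : ∀ i, AbsolutelyContinuousOnInterval (fun x ↦ f x i) a b) :
    AbsolutelyContinuousOnInterval f a b := by
  have hsum := tendsto_finsetSum Finset.univ fun i _ ↦ hf i
  rw [Finset.sum_const_zero] at hsum
  refine squeeze_zero (fun E ↦ Finset.sum_nonneg fun k _ ↦ dist_nonneg) (fun E ↦ ?_) hsum
  rw [Finset.sum_comm]
  refine Finset.sum_le_sum fun k _ ↦ (dist_pi_le_iff (by positivity)).2 fun i ↦ ?_
  exact Finset.single_le_sum (f := fun i ↦ dist (f (E.2 k).1 i) (f (E.2 k).2 i))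
    (fun _ _ ↦ dist_nonneg) (Finset.mem_univ i)

lemma absolutelyContinuousOnInterval_comp_of_locallyLipschitz {E : Type*}
    [SeminormedAddCommGroup E] {φ : E → X} {f : ℝ → E} (hφ : LocallyLipschitz φ)
    (hf : AbsolutelyContinuousOnInterval f a b) :
    AbsolutelyContinuousOnInterval (fun x ↦ φ (f x)) a b := by
  have hcompact := isCompact_uIcc.image_of_continuousOn hf.continuousOn
  obtain ⟨K, hK⟩ := hφ.locallyLipschitzOn.exists_lipschitzOnWith_of_compact hcompact
  exact absolutelyContinuousOnInterval_of_dist_le K hf fun x hx y hy ↦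
    hK.dist_le_mul _ (mem_image_of_mem f hx) _ (mem_image_of_mem f hy)

end AbsolutelyContinuous

section IntegralEquation

variable {a b : ℝ} {E : Type*} [NormedAddCommGroup E] [NormedSpace ℝ E] {f g : ℝ → E} {c : E}

lemma absolutelyContinuousOnInterval_of_eq_add_integral (hg : IntervalIntegrable g volume a b)
    (hf : ∀ x ∈ uIcc a b, f x = c + ∫ t in a..x, g t) :
    AbsolutelyContinuousOnInterval f a b := by
  refine absolutelyContinuousOnInterval_of_dist_le 1
    (hg.norm.absolutelyContinuousOnInterval_intervalIntegral left_mem_uIcc) fun x hx y hy ↦ ?_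
  have hga : ∀ z ∈ uIcc a b, IntervalIntegrable g volume a z := fun z hz ↦
    hg.mono_set (uIcc_subset_uIcc_left hz)
  rw [hf x hx, hf y hy, dist_add_left, one_mul, dist_eq_norm, Real.dist_eq,
    intervalIntegral.integral_interval_sub_left (hga x hx) (hga y hy),
    intervalIntegral.integral_interval_sub_left (hga x hx).norm (hga y hy).norm]
  exact intervalIntegral.norm_integral_le_abs_integral_norm

lemma ae_hasDerivAt_of_eq_add_integral [CompleteSpace E] (hg : IntervalIntegrable g volume a b)
    (hf : ∀ x ∈ uIcc a b, f x = c + ∫ t in a..x, g t) :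
    ∀ᵐ x, x ∈ uIcc a b → HasDerivAt f (g x) x := by
  filter_upwards [hg.ae_hasDerivAt_integral, Measure.ae_ne volume a, Measure.ae_ne volume b]
    with x hderiv hxa hxb hx
  have hnhds : uIcc a b ∈ 𝓝 x := by
    rw [uIcc, Icc_mem_nhds_iff]
    grind [uIcc]
  refine ((hderiv hx a left_mem_uIcc).const_add c).congr_of_eventuallyEq ?_
  filter_upwards [hnhds] with y hy using hf y hy

end IntegralEquation

section Jacobi

variable {m R : Type*} [Fintype m] [DecidableEq m]

lemma sum_det_updateRow_eq_trace_adjugate_mul [CommRing R] (A B : Matrix m m R) :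
    ∑ i, (A.updateRow i (B.row i)).det = (A.adjugate * B).trace := by
  rw [Matrix.trace_mul_comm]
  refine Finset.sum_congr rfl fun i _ ↦ ?_
  rw [← Matrix.cramer_transpose_apply, Matrix.cramer_eq_adjugate_mulVec,
    ← Matrix.adjugate_transpose, Matrix.mulVec_transpose, Matrix.diag_apply,
    Matrix.mul_apply_eq_vecMul, Matrix.row]

lemma trace_adjugate_mul_mul_self [CommRing R] (A B : Matrix m m R) :
    (A.adjugate * (B * A)).trace = B.trace * A.det := by
  rw [Matrix.trace_mul_comm, Matrix.mul_assoc, Matrix.mul_adjugate, Matrix.mul_smul,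
    Matrix.mul_one, Matrix.trace_smul, smul_eq_mul, mul_comm]

variable [NormedCommRing R] {𝕜 : Type*} [NontriviallyNormedField 𝕜] [NormedAlgebra 𝕜 R]

variable (𝕜 m R) in
/-- The determinant as a continuous multilinear function of the rows, from which it
inherits smoothness and its derivative. The scalars `𝕜` may be smaller than the ring of entries, so
that matrices over `R` can depend on a parameter in `𝕜`. -/
def detContinuousMultilinear : ContinuousMultilinearMap 𝕜 (fun _ : m ↦ m → R) R where
  toMultilinearMap :=
    (Matrix.detRowAlternating (n := m) (R := R)).toMultilinearMap.restrictScalars 𝕜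
  cont := Continuous.matrix_det continuous_id

lemma hasDerivAt_det {A : 𝕜 → Matrix m m R} {A' : Matrix m m R} {x : 𝕜}
    (hA : HasDerivAt A A' x) :
    HasDerivAt (fun t ↦ (A t).det) ((A x).adjugate * A').trace x := by
  have hdet := ((detContinuousMultilinear m R 𝕜).hasFDerivAt (A x)).comp_hasDerivAt x hA
  have hsum : (detContinuousMultilinear m R 𝕜).linearDeriv (A x) A' =
      ((A x).adjugate * A').trace :=
    (ContinuousMultilinearMap.linearDeriv_apply ..).trans
      (sum_det_updateRow_eq_trace_adjugate_mul (A x) A')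
  exact hsum ▸ hdet

-- `Matrix` carries no global norm, so the domain is the function space `m → m → R`.
lemma locallyLipschitz_det [NormedAlgebra ℝ R] :
    LocallyLipschitz fun A : m → m → R ↦ (Matrix.of A).det :=
  (detContinuousMultilinear m R ℝ).contDiff.locallyLipschitz

lemma absolutelyContinuousOnInterval_det [NormedAlgebra ℝ R] {A : ℝ → Matrix m m R} {a b : ℝ}
    (hA : ∀ i j, AbsolutelyContinuousOnInterval (fun x ↦ A x i j) a b) :
    AbsolutelyContinuousOnInterval (fun x ↦ (A x).det) a b :=
  absolutelyContinuousOnInterval_comp_of_locallyLipschitz (E := m → m → R) (f := A)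
    locallyLipschitz_det
    (absolutelyContinuousOnInterval_pi fun i ↦ absolutelyContinuousOnInterval_pi (hA i))

end Jacobi

section ScalarEquation

variable {𝕜 : Type*} [RCLike 𝕜] {a b : ℝ}

lemma hasDerivAt_mul_exp_neg {f u : ℝ → 𝕜} {g : 𝕜} {x : ℝ} (hf : HasDerivAt f (g * f x) x)
    (hu : HasDerivAt u g x) :
    HasDerivAt (fun t ↦ f t * NormedSpace.exp (-u t)) 0 x := by
  have hexp : HasDerivAt (fun t ↦ NormedSpace.exp (-u t)) (NormedSpace.exp (-u x) * -g) x :=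
    hasDerivAt_exp.comp x hu.neg
  refine (hf.mul hexp).congr_deriv ?_
  ring

lemma locallyLipschitz_exp : LocallyLipschitz (NormedSpace.exp : 𝕜 → 𝕜) :=
  (AnalyticOnNhd.contDiff (𝕜 := 𝕜) fun x _ ↦ NormedSpace.exp_analytic x).locallyLipschitz

lemma eq_mul_exp_integral_of_ae_hasDerivAt_mul_self {f g : ℝ → 𝕜}
    (hf : AbsolutelyContinuousOnInterval f a b) (hg : IntervalIntegrable g volume a b)
    (hfg : ∀ᵐ x, x ∈ uIcc a b → HasDerivAt f (g x * f x) x) {s : ℝ} (hs : s ∈ uIcc a b) :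
    f s = f a * NormedSpace.exp (∫ t in a..s, g t) := by
  set u : ℝ → 𝕜 := fun x ↦ ∫ t in a..x, g t
  have hu : AbsolutelyContinuousOnInterval u a b :=
    absolutelyContinuousOnInterval_of_eq_add_integral (c := 0) hg fun x _ ↦ (zero_add _).symm
  have hexp : AbsolutelyContinuousOnInterval (fun x ↦ NormedSpace.exp (-u x)) a b :=
    absolutelyContinuousOnInterval_comp_of_locallyLipschitz locallyLipschitz_exp hu.neg
  have hzero : ∀ᵐ x, x ∈ uIcc a b → HasDerivAt (fun t ↦ f t * NormedSpace.exp (-u t)) 0 x := by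
    filter_upwards [hfg, hg.ae_hasDerivAt_integral] with x hfx hgx hx
    exact hasDerivAt_mul_exp_neg (hfx hx) (hgx hx a left_mem_uIcc)
  obtain ⟨C, hC⟩ := (hf.smul hexp).const_of_ae_hasDerivAt_zero hzero
  have hconst : f s * NormedSpace.exp (-u s) = f a := by
    calc f s * NormedSpace.exp (-u s) = f a * NormedSpace.exp (-u a) :=
          (hC s hs).trans (hC a left_mem_uIcc).symm
      _ = f a := by simp [u]
  rw [← hconst, mul_assoc, ← NormedSpace.exp_add, neg_add_cancel, NormedSpace.exp_zero, mul_one]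

end ScalarEquation

section Liouville

variable {a b : ℝ}

lemma intervalIntegrable_matrix_mul_apply {l m n R : Type*} [Fintype m] [NormedRing R]
    {G : ℝ → Matrix l m R} {F : ℝ → Matrix m n R}
    (hG : ∀ i k, IntervalIntegrable (fun s ↦ G s i k) volume a b)
    (hF : ∀ k j, ContinuousOn (fun s ↦ F s k j) (uIcc a b)) (i : l) (j : n) :
    IntervalIntegrable (fun s ↦ (G s * F s) i j) volume a b := by
  simpa only [Matrix.mul_apply, Finset.sum_fn] using
    IntervalIntegrable.sum Finset.univ fun k _ ↦ (hG i k).mul_continuousOn (hF k j)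

lemma intervalIntegrable_trace {m E : Type*} [Fintype m] [NormedAddCommGroup E]
    {G : ℝ → Matrix m m E} (hG : ∀ i, IntervalIntegrable (fun s ↦ G s i i) volume a b) :
    IntervalIntegrable (fun s ↦ (G s).trace) volume a b := by
  simpa only [Matrix.trace, Matrix.diag_apply, Finset.sum_fn] using
    IntervalIntegrable.sum Finset.univ fun i _ ↦ hG i

theorem stmt11_general {m 𝕜 : Type*} [Fintype m] [DecidableEq m] [RCLike 𝕜]
    {F G : ℝ → Matrix m m 𝕜} {A : Matrix m m 𝕜}
    (hF : ∀ i j, ContinuousOn (fun s ↦ F s i j) (uIcc a b))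
    (hG : ∀ i j, IntervalIntegrable (fun s ↦ G s i j) volume a b)
    (hFG : ∀ s ∈ uIcc a b, ∀ i j, F s i j = A i j + ∫ σ in a..s, (G σ * F σ) i j)
    {s : ℝ} (hs : s ∈ uIcc a b) :
    (F s).det = A.det * NormedSpace.exp (∫ σ in a..s, (G σ).trace) := by
  have hGF := intervalIntegrable_matrix_mul_apply hG hF
  have hentry (i j : m) := fun x hx ↦ hFG x hx i j
  have hdet : AbsolutelyContinuousOnInterval (fun s ↦ (F s).det) a b :=
    absolutelyContinuousOnInterval_det fun i j ↦
      absolutelyContinuousOnInterval_of_eq_add_integral (hGF i j) (hentry i j)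
  have hderiv : ∀ᵐ x, x ∈ uIcc a b →
      HasDerivAt (fun s ↦ (F s).det) ((G x).trace * (F x).det) x := by
    have hF' := ae_all_iff.2 fun i ↦ ae_all_iff.2 fun j ↦
      ae_hasDerivAt_of_eq_add_integral (hGF i j) (hentry i j)
    filter_upwards [hF'] with x hx hxab
    rw [← trace_adjugate_mul_mul_self]
    exact hasDerivAt_det (hasDerivAt_pi.2 fun i ↦ hasDerivAt_pi.2 fun j ↦ hx i j hxab)
  have hFa : F a = A := by ext i j; simp [hFG a left_mem_uIcc i j]
  rw [eq_mul_exp_integral_of_ae_hasDerivAt_mul_self hdet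
    (intervalIntegrable_trace fun i ↦ hG i i) hderiv hs, hFa]

end Liouville

/-- determinant of a solution of a linear matrix integral equation
(Lemma `lem:dettr`, Bonk–Heinonen–Saksman). -/
theorem stmt11 (n : ℕ) (F G : ℝ → Matrix (Fin n) (Fin n) ℝ)
    (hFcont : ∀ i j, ContinuousOn (fun s => F s i j) (Icc (0 : ℝ) 1))
    (hGint : ∀ i j, IntegrableOn (fun s => G s i j) (Icc (0 : ℝ) 1))
    (hODE : ∀ s ∈ Icc (0 : ℝ) 1, ∀ i j,
      F s i j = (1 : Matrix (Fin n) (Fin n) ℝ) i j + ∫ σ in (0 : ℝ)..s, (G σ * F σ) i j) :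
    ∀ s ∈ Icc (0 : ℝ) 1,
      (F s).det = Real.exp (∫ σ in (0 : ℝ)..s, (G σ).trace) := by
  simp only [← uIcc_of_le (zero_le_one' ℝ)] at hFcont hODE ⊢
  intro s hs
  have hG : ∀ i j, IntervalIntegrable (fun s => G s i j) volume 0 1 := fun i j =>
    (intervalIntegrable_iff_integrableOn_Icc_of_le zero_le_one).2 (hGint i j)
  rw [stmt11_general hFcont hG hODE hs, Matrix.det_one, one_mul, Real.exp_eq_exp_ℝ]
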